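/- arXiv:2102.10346 — 8 statements merged into one kernel-verified Lean document; each statement's English description precedes it below -/
import Mathlib

section
/- Let p ∈ [0, 1] and let {S_t}_{t∈ℕ} be an n-dimensional martingale adapted to a filtration {F_t}_{t∈ℕ} with S_0 = 0 and E[|S_t|^{1+p}] < ∞ for every t, and set X_i = S_i − S_{i−1}. Then E[|S_t|^{1+p}] ≤ 2^{1−p} n^{1−(1+p)/2} Σ_{i=1}^{t} E[|X_i|^{1+p}]. -/
open MeasureTheory Filter

/-- Hoelder bound for the derivative of `|x|^(1+p)`, up to the factor `1+p`. -/
lemma mmb_holder {p : ℝ} (hp : 0 < p) (hp1 : p ≤ 1) {x y : ℝ} (hxy : x ≤ y) :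
    |y| ^ (p - 1) * y - |x| ^ (p - 1) * x ≤ 2 ^ (1 - p) * (y - x) ^ p := by
  have hpos : ∀ z : ℝ, 0 ≤ z → |z| ^ (p - 1) * z = z ^ p := by
    intro z hz
    rcases hz.eq_or_lt with rfl | hz
    · simp [Real.zero_rpow hp.ne']
    · rw [abs_of_pos hz, ← Real.rpow_add_one hz.ne']; simp
  have hneg : ∀ z : ℝ, z ≤ 0 → |z| ^ (p - 1) * z = - (-z) ^ p := by
    intro z hz
    have := hpos (-z) (by linarith)
    rw [abs_neg] at this
    linarith
  have h2 : (1 : ℝ) ≤ 2 ^ (1 - p) := Real.one_le_rpow (by norm_num) (by linarith)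
  have hd : 0 ≤ (y - x) ^ p := Real.rpow_nonneg (by linarith) _
  rcases le_total 0 x with hx | hx
  · rw [hpos x hx, hpos y (hx.trans hxy)]
    have := Real.rpow_add_le_add_rpow hx (sub_nonneg.2 hxy) hp.le hp1
    rw [add_sub_cancel] at this
    nlinarith
  · rcases le_total y 0 with hy | hy
    · rw [hneg x hx, hneg y hy]
      have := Real.rpow_add_le_add_rpow (neg_nonneg.2 hy) (sub_nonneg.2 hxy) hp.le hp1
      rw [show -y + (y - x) = -x by ring] at this
      nlinarith
    · rw [hneg x hx, hpos y hy]
      have hc := (Real.concaveOn_rpow hp.le hp1).2 (Set.mem_Ici.2 hy)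
        (Set.mem_Ici.2 (neg_nonneg.2 hx)) (by norm_num : (0:ℝ) ≤ 1/2)
        (by norm_num : (0:ℝ) ≤ 1/2) (by norm_num)
      simp only [smul_eq_mul] at hc
      rw [← mul_add, ← mul_add, Real.mul_rpow (by norm_num) (by linarith)] at hc
      have e : (1 / 2 : ℝ) ^ p = 2 ^ (1 - p) / 2 := by
        rw [Real.rpow_sub (by norm_num), Real.div_rpow (by norm_num) (by norm_num)]
        simp; field_simp
      rw [e] at hc
      rw [sub_eq_add_neg y x]
      linarith

lemma mmb_scalar_pos {p : ℝ} (hp : 0 < p) (hp1 : p ≤ 1) (a : ℝ) {b : ℝ} (hb : 0 ≤ b) :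
    |a + b| ^ (1 + p) ≤ |a| ^ (1 + p) + (1 + p) * (|a| ^ (p - 1) * a) * b
      + 2 ^ (1 - p) * |b| ^ (1 + p) := by
  let φ : ℝ → ℝ := fun s => |a| ^ (1 + p) + (1 + p) * (|a| ^ (p - 1) * a) * s
      + 2 ^ (1 - p) * |s| ^ (1 + p) - |a + s| ^ (1 + p)
  have hder : ∀ s, HasDerivAt φ ((1 + p) * (|a| ^ (p - 1) * a) * 1
      + 2 ^ (1 - p) * ((1 + p) * |s| ^ ((1 + p) - 2) * s)
      - ((1 + p) * |a + s| ^ ((1 + p) - 2) * (a + s))) s := by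
    intro s
    have h1 := (hasDerivAt_id s).const_mul ((1 + p) * (|a| ^ (p - 1) * a))
    have h2 := (hasDerivAt_abs_rpow s (p := 1 + p) (by linarith)).const_mul ((2:ℝ) ^ (1 - p))
    have h3 := (hasDerivAt_abs_rpow (a + s) (p := 1 + p) (by linarith)).comp_const_add a s
    exact ((h1.const_add (|a| ^ (1 + p))).add h2).sub h3
  have hmono : MonotoneOn φ (Set.Ici 0) := by
    apply monotoneOn_of_deriv_nonneg (convex_Ici 0)
    · exact fun s _ => (hder s).continuousAt.continuousWithinAt
    · exact fun s _ => (hder s).differentiableAt.differentiableWithinAt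
    · intro s hs
      rw [interior_Ici, Set.mem_Ioi] at hs
      rw [(hder s).deriv]
      have := mmb_holder hp hp1 (x := a) (y := a + s) (by linarith)
      rw [show (1 + p) - 2 = p - 1 by ring]
      have e : |s| ^ (p - 1) * s = s ^ p := by
        rw [abs_of_pos hs, ← Real.rpow_add_one hs.ne']; simp
      rw [add_sub_cancel_left, ← e] at this
      have := mul_le_mul_of_nonneg_left this (by linarith : 0 ≤ 1 + p)
      linarith
  have h := hmono (Set.mem_Ici.2 le_rfl) (Set.mem_Ici.2 hb) hb
  have h0 : φ 0 = 0 := by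
    simp [φ, Real.zero_rpow (by linarith : 1 + p ≠ 0)]
  rw [h0] at h
  simp only [φ] at h
  linarith

lemma mmb_scalar {p : ℝ} (hp : 0 ≤ p) (hp1 : p ≤ 1) (a b : ℝ) :
    |a + b| ^ (1 + p) ≤ |a| ^ (1 + p) + (1 + p) * (|a| ^ (p - 1) * a * b)
      + 2 ^ (1 - p) * |b| ^ (1 + p) := by
  rcases hp.eq_or_lt with rfl | hp
  · simp only [add_zero, Real.rpow_one, zero_sub, sub_zero, one_mul]
    have h1 : |(|a| ^ (-1 : ℝ) * a * b)| ≤ |b| := by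
      rw [abs_mul, abs_mul, Real.rpow_neg_one, abs_inv, abs_abs]
      rcases eq_or_ne a 0 with rfl | ha
      · simp
      · rw [inv_mul_cancel₀ (abs_ne_zero.2 ha), one_mul]
    have := abs_add_le a b
    have := neg_abs_le (|a| ^ (-1 : ℝ) * a * b)
    linarith
  · rcases le_total 0 b with hb | hb
    · have := mmb_scalar_pos hp hp1 a hb
      linarith
    · have := mmb_scalar_pos hp hp1 (-a) (neg_nonneg.2 hb)
      rw [← neg_add, abs_neg, abs_neg, abs_neg] at this
      linarith

lemma mmb_g_bound {p : ℝ} (hp : 0 ≤ p) (a b : ℝ) :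
    |(|a| ^ (p - 1) * a * b)| ≤ |a| ^ (1 + p) + |b| ^ (1 + p) := by
  have hA : 0 ≤ |a| ^ (1 + p) := by positivity
  have hB : 0 ≤ |b| ^ (1 + p) := by positivity
  rcases eq_or_ne a 0 with rfl | ha
  · simp only [mul_zero, zero_mul, abs_zero] at *; linarith
  have ha' : 0 < |a| := abs_pos.2 ha
  rw [abs_mul, abs_mul, abs_of_nonneg (Real.rpow_nonneg (abs_nonneg a) _),
    ← Real.rpow_add_one ha'.ne', sub_add_cancel]
  rcases le_total |a| |b| with h | h
  · have hb : 0 < |b| := ha'.trans_le h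
    have := Real.rpow_le_rpow ha'.le h hp
    have e : |b| ^ (1 + p) = |b| ^ p * |b| := by rw [add_comm, Real.rpow_add_one hb.ne']
    nlinarith
  · have e : |a| ^ (1 + p) = |a| ^ p * |a| := by rw [add_comm, Real.rpow_add_one ha'.ne']
    have : 0 ≤ |a| ^ p := by positivity
    nlinarith

lemma mmb_norm_le {n : ℕ} {p : ℝ} (hp : 0 ≤ p) (hp1 : p ≤ 1) (v : EuclideanSpace ℝ (Fin n)) :
    ‖v‖ ^ (1 + p) ≤ ∑ j, |v j| ^ (1 + p) := by
  have e : ∀ x : ℝ, 0 ≤ x → x ^ (1 + p) = (x ^ 2) ^ ((1 + p) / 2) := by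
    intro x hx
    rw [← Real.rpow_natCast, ← Real.rpow_mul hx]; congr 1; push_cast; ring
  rw [e _ (norm_nonneg v), EuclideanSpace.norm_sq_eq]
  refine (Finset.le_sum_of_subadditive_on_pred (fun x : ℝ => x ^ ((1 + p) / 2)) (fun x => 0 ≤ x)
    (le_of_eq (Real.zero_rpow (by linarith))) ?_ ?_ _ ?_).trans_eq ?_
  · exact fun x y hx hy => Real.rpow_add_le_add_rpow hx hy (by linarith) (by linarith)
  · exact fun x y hx hy => add_nonneg hx hy
  · intros; positivity
  · refine Finset.sum_congr rfl fun j _ => ?_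
    rw [e _ (abs_nonneg _), Real.norm_eq_abs]

lemma mmb_le_norm {n : ℕ} {p : ℝ} (hp : 0 ≤ p) (hp1 : p ≤ 1) (v : EuclideanSpace ℝ (Fin n)) :
    ∑ j, |v j| ^ (1 + p) ≤ (n : ℝ) ^ (1 - (1 + p) / 2) * ‖v‖ ^ (1 + p) := by
  have hr : 0 < 2 / (1 + p) := by positivity
  have h := Real.rpow_sum_le_const_mul_sum_rpow_of_nonneg (f := fun j => |v j| ^ (1 + p))
    (p := 2 / (1 + p)) Finset.univ (by rw [le_div_iff₀] <;> linarith)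
    (fun j _ => by positivity)
  have e : ∀ j, (|v j| ^ (1 + p)) ^ (2 / (1 + p)) = ‖v j‖ ^ 2 := by
    intro j
    rw [← Real.rpow_mul (abs_nonneg _), ← Real.rpow_natCast, Real.norm_eq_abs]
    congr 1; push_cast; field_simp
  simp only [e] at h
  rw [← EuclideanSpace.norm_sq_eq, Finset.card_univ, Fintype.card_fin] at h
  have hs : 0 ≤ ∑ j, |v j| ^ (1 + p) := Finset.sum_nonneg fun j _ => by positivity
  have h' := Real.rpow_le_rpow (by positivity) h (by positivity : 0 ≤ (1 + p) / 2)
  rw [← Real.rpow_mul hs, Real.mul_rpow (by positivity) (by positivity),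
    ← Real.rpow_mul (by positivity), ← Real.rpow_natCast, ← Real.rpow_mul (norm_nonneg _)] at h'
  have h1 : 2 / (1 + p) * ((1 + p) / 2) = 1 := by field_simp
  have h2 : (2 / (1 + p) - 1) * ((1 + p) / 2) = 1 - (1 + p) / 2 := by field_simp
  have h3 : ((2 : ℕ) : ℝ) * ((1 + p) / 2) = 1 + p := by push_cast; ring
  rwa [h1, h2, h3, Real.rpow_one] at h'

/-- Orthogonality of martingale increments. -/
lemma mmb_orth {n : ℕ} {Ω : Type} {m0 : MeasurableSpace Ω} {P : Measure Ω}
    [IsProbabilityMeasure P] (ℱ : Filtration ℕ m0)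
    (S : ℕ → Ω → EuclideanSpace ℝ (Fin n)) (hmart : Martingale S ℱ P) (t : ℕ)
    (G : Ω → EuclideanSpace ℝ (Fin n)) (hG : StronglyMeasurable[ℱ t] G)
    (hi : Integrable (fun ω => inner ℝ (G ω) (S (t + 1) ω - S t ω)) P) :
    ∫ ω, inner ℝ (G ω) (S (t + 1) ω - S t ω) ∂P = 0 := by
  have hX : Integrable (S (t + 1) - S t) P := (hmart.integrable _).sub (hmart.integrable _)
  have h := condExp_bilin_of_stronglyMeasurable_left (m := ℱ t) (μ := P)
    (innerSL ℝ (E := EuclideanSpace ℝ (Fin n))) hG (g := S (t + 1) - S t) hi hX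
  have hz : P[S (t + 1) - S t | ℱ t] =ᵐ[P] 0 := by
    have h1 := condExp_sub (hmart.integrable (t + 1)) (hmart.integrable t) (ℱ t)
    have h2 := hmart.condExp_ae_eq (Nat.le_succ t)
    have h3 := hmart.condExp_ae_eq (le_refl t)
    filter_upwards [h1, h2, h3] with ω h1 h2 h3
    rw [h1, Pi.sub_apply, h2, h3]; simp
  have h4 := integral_condExp (μ := P) (ℱ.le t)
    (f := fun ω => innerSL ℝ (G ω) ((S (t + 1) - S t) ω))
  have h5 : ∫ ω, (P[fun ω => innerSL ℝ (G ω) ((S (t + 1) - S t) ω) | ℱ t]) ω ∂P = 0 := by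
    rw [integral_eq_zero_of_ae]
    filter_upwards [h, hz] with ω h hz
    rw [h, hz]; simp
  rw [h5] at h4
  exact h4.symm

/-- for `p ∈ [0,1]` and an `ℝ^n`-valued martingale `{S_t}` (Euclidean norm)
with `S_0 = 0` and `E[|S_t|^{1+p}] < ∞` for every `t`, setting `X_i = S_i − S_{i−1}`,
one has `E[|S_t|^{1+p}] ≤ 2^{1−p} n^{1−(1+p)/2} Σ_{i=1}^t E[|X_i|^{1+p}]`. -/
theorem martingale_moment_bound
    {n : ℕ} {Ω : Type} {m0 : MeasurableSpace Ω} {P : Measure Ω} [IsProbabilityMeasure P]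
    (ℱ : Filtration ℕ m0) (p : ℝ) (hp : p ∈ Set.Icc (0 : ℝ) 1)
    (S : ℕ → Ω → EuclideanSpace ℝ (Fin n)) (hmart : Martingale S ℱ P)
    (hS0 : ∀ ω, S 0 ω = 0)
    (hint : ∀ t, Integrable (fun ω => ‖S t ω‖ ^ (1 + p)) P) (t : ℕ) :
    ∫ ω, ‖S t ω‖ ^ (1 + p) ∂P ≤
      2 ^ (1 - p) * (n : ℝ) ^ (1 - (1 + p) / 2) *
        ∑ i ∈ Finset.range t, ∫ ω, ‖S (i + 1) ω - S i ω‖ ^ (1 + p) ∂P := by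
  obtain ⟨hp0, hp1⟩ := hp
  have hq : 0 < 1 + p := by linarith
  have key : ∀ f : Ω → EuclideanSpace ℝ (Fin n), AEStronglyMeasurable f P →
      (Integrable (fun ω => ‖f ω‖ ^ (1 + p)) P ↔ MemLp f (ENNReal.ofReal (1 + p)) P) := by
    intro f hf
    rw [← integrable_norm_rpow_iff hf (by simp [hq]) (by simp), ENNReal.toReal_ofReal hq.le]
  have hintX : ∀ t, Integrable (fun ω => ‖S (t + 1) ω - S t ω‖ ^ (1 + p)) P := by
    intro t
    have h1 := (key _ (hmart.integrable (t + 1)).1).1 (hint _)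
    have h2 := (key _ (hmart.integrable t).1).1 (hint _)
    exact (key _ ((hmart.integrable (t + 1)).1.sub (hmart.integrable t).1)).2 (h1.sub h2)
  let Φ : EuclideanSpace ℝ (Fin n) → ℝ := fun v => ∑ j, |v j| ^ (1 + p)
  have hΦ0 : ∀ v, 0 ≤ Φ v := fun v => Finset.sum_nonneg fun j _ => by positivity
  have hΦc : Continuous Φ := by
    refine continuous_finsetSum _ fun j _ => ?_
    exact Continuous.rpow_const (by fun_prop) (fun _ => Or.inr hq.le)
  have hΦi : ∀ f : Ω → EuclideanSpace ℝ (Fin n), AEStronglyMeasurable f P →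
      Integrable (fun ω => ‖f ω‖ ^ (1 + p)) P → Integrable (fun ω => Φ (f ω)) P := by
    intro f hf hi
    refine (hi.const_mul ((n : ℝ) ^ (1 - (1 + p) / 2))).mono'
      (hΦc.comp_aestronglyMeasurable hf) (ae_of_all _ fun ω => ?_)
    rw [Real.norm_of_nonneg (hΦ0 _)]
    exact mmb_le_norm hp0 hp1 _
  have hiS : ∀ t, Integrable (fun ω => Φ (S t ω)) P :=
    fun t => hΦi _ (hmart.integrable t).1 (hint t)
  have hiX : ∀ t, Integrable (fun ω => Φ (S (t + 1) ω - S t ω)) P :=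
    fun t => hΦi _ ((hmart.integrable (t + 1)).1.sub (hmart.integrable t).1) (hintX t)
  let G : EuclideanSpace ℝ (Fin n) → EuclideanSpace ℝ (Fin n) :=
    fun v => WithLp.toLp 2 fun j => |v j| ^ (p - 1) * v j
  have hGm : Measurable G := by
    refine (WithLp.measurable_toLp 2 _).comp (measurable_pi_lambda _ fun j => ?_)
    have : Measurable fun v : EuclideanSpace ℝ (Fin n) => v j := by fun_prop
    exact ((measurable_norm.comp this).pow_const _).mul this
  have hinner : ∀ x y, inner ℝ (G x) y = ∑ j, |x j| ^ (p - 1) * x j * y j := by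
    intro x y
    simp [PiLp.inner_apply, G, mul_comm]
  have hGS : ∀ t, StronglyMeasurable[ℱ t] fun ω => G (S t ω) := fun t =>
    (hGm.comp (hmart.stronglyMeasurable t).measurable).stronglyMeasurable
  have hiG : ∀ t, Integrable (fun ω => inner ℝ (G (S t ω)) (S (t + 1) ω - S t ω)) P := by
    intro t
    refine ((hiS t).add (hiX t)).mono' ?_ (ae_of_all _ fun ω => ?_)
    · exact ((hGS t).mono (ℱ.le t)).aestronglyMeasurable.inner
        ((hmart.integrable (t + 1)).1.sub (hmart.integrable t).1)
    · rw [hinner, Real.norm_eq_abs]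
      refine (Finset.abs_sum_le_sum_abs _ _).trans ?_
      simp only [Pi.add_apply, Φ]
      rw [← Finset.sum_add_distrib]
      exact Finset.sum_le_sum fun j _ => mmb_g_bound hp0 _ _
  have hpt : ∀ x y, Φ (x + y) ≤ Φ x + (1 + p) * inner ℝ (G x) y + 2 ^ (1 - p) * Φ y := by
    intro x y
    rw [hinner]
    simp only [Φ]
    rw [Finset.mul_sum, Finset.mul_sum, ← Finset.sum_add_distrib, ← Finset.sum_add_distrib]
    exact Finset.sum_le_sum fun j _ => mmb_scalar hp0 hp1 _ _
  have hstep : ∀ t, ∫ ω, Φ (S (t + 1) ω) ∂P ≤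
      ∫ ω, Φ (S t ω) ∂P + 2 ^ (1 - p) * ∫ ω, Φ (S (t + 1) ω - S t ω) ∂P := by
    intro t
    have hi1 := (hiS t).add ((hiG t).const_mul (1 + p))
    have hi2 := (hiX t).const_mul ((2 : ℝ) ^ (1 - p))
    have h := integral_mono (hiS (t + 1)) (hi1.add hi2) (fun ω => by
      have := hpt (S t ω) (S (t + 1) ω - S t ω)
      rw [add_sub_cancel] at this
      exact this)
    rw [integral_add' hi1 hi2, integral_add' (hiS t) ((hiG t).const_mul (1 + p)),
      integral_const_mul, integral_const_mul,
      mmb_orth ℱ S hmart t _ (hGS t) (hiG t), mul_zero, add_zero] at h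
    exact h
  have hmain : ∀ t, ∫ ω, Φ (S t ω) ∂P ≤
      2 ^ (1 - p) * ∑ i ∈ Finset.range t, ∫ ω, Φ (S (i + 1) ω - S i ω) ∂P := by
    intro t
    induction t with
    | zero => simp [hS0, Φ, Real.zero_rpow hq.ne']
    | succ k ih =>
      rw [Finset.sum_range_succ, mul_add]
      exact (hstep k).trans (by linarith)
  calc ∫ ω, ‖S t ω‖ ^ (1 + p) ∂P ≤ ∫ ω, Φ (S t ω) ∂P :=
        integral_mono (hint t) (hiS t) fun ω => mmb_norm_le hp0 hp1 _
    _ ≤ _ := hmain t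
    _ ≤ _ := by
      rw [mul_assoc]
      refine mul_le_mul_of_nonneg_left ?_ (by positivity)
      rw [Finset.mul_sum]
      refine Finset.sum_le_sum fun i _ => ?_
      rw [← integral_const_mul]
      exact integral_mono (hiX i) ((hintX i).const_mul _) fun ω => mmb_le_norm hp0 hp1 _
end

section
/- Let p ∈ [0, 1] and let {S_t}_{t∈ℕ} be a real-valued martingale adapted to a filtration {F_t}_{t∈ℕ} with S_0 = 0 and E[|S_t|^{1+p}] < ∞ for every t, and set X_i = S_i − S_{i−1}. Then E[|S_t|^{1+p}] ≤ 2^{1−p} Σ_{i=1}^{t} E[|X_i|^{1+p}]. -/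
open MeasureTheory Filter

namespace MMB

/-- the derivative kernel `sgn(x) |x|^p` -/
noncomputable def g (p x : ℝ) : ℝ := |x| ^ (p - 1) * x

lemma g_neg (p x : ℝ) : g p (-x) = - g p x := by simp [g]

lemma g_of_pos {p x : ℝ} (hx : 0 < x) : g p x = x ^ p := by
  have := Real.rpow_add_one hx.ne' (p - 1)
  rw [sub_add_cancel] at this
  simp [g, abs_of_pos hx, this]

lemma g_of_nonneg {p x : ℝ} (hp : 0 < p) (hx : 0 ≤ x) : g p x = x ^ p := by
  rcases hx.eq_or_lt with rfl | hx
  · simp [g, Real.zero_rpow hp.ne']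
  · exact g_of_pos hx

lemma abs_g_le {p : ℝ} (x : ℝ) : |g p x| ≤ |x| ^ p := by
  rcases eq_or_ne x 0 with rfl | hx
  · simp only [g, mul_zero, abs_zero]; positivity
  · have h : 0 < |x| := abs_pos.mpr hx
    rw [← g_of_pos h]
    simp [g, abs_mul, abs_of_nonneg (Real.rpow_nonneg (abs_nonneg x) (p - 1))]

lemma subadd {p a b : ℝ} (hp : 0 ≤ p) (hp1 : p ≤ 1) (ha : 0 ≤ a) (hb : 0 ≤ b) :
    (a + b) ^ p ≤ a ^ p + b ^ p := by
  lift a to NNReal using ha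
  lift b to NNReal using hb
  exact_mod_cast NNReal.rpow_add_le_add_rpow a b hp hp1

lemma conc {p a b : ℝ} (hp : 0 ≤ p) (hp1 : p ≤ 1) (ha : 0 ≤ a) (hb : 0 ≤ b) :
    a ^ p + b ^ p ≤ 2 ^ (1 - p) * (a + b) ^ p := by
  have h := (Real.concaveOn_rpow hp hp1).2 (Set.mem_Ici.mpr ha) (Set.mem_Ici.mpr hb)
    (show (0 : ℝ) ≤ 1 / 2 by norm_num) (show (0 : ℝ) ≤ 1 / 2 by norm_num) (by norm_num)
  simp only [smul_eq_mul] at h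
  rw [← mul_add, ← mul_add, Real.mul_rpow (by norm_num) (by positivity),
    Real.div_rpow (by norm_num) (by norm_num), Real.one_rpow] at h
  rw [Real.rpow_sub (by norm_num), Real.rpow_one]
  have e : 2 / (2 : ℝ) ^ p * (a + b) ^ p = 2 * (1 / 2 ^ p * (a + b) ^ p) := by ring
  rw [e]; linarith

lemma one_le_two {p : ℝ} (hp1 : p ≤ 1) : (1 : ℝ) ≤ 2 ^ (1 - p) :=
  Real.one_le_rpow (by norm_num) (by linarith)

lemma holder {p : ℝ} (hp : 0 < p) (hp1 : p ≤ 1) (x : ℝ) {s : ℝ} (hs : 0 ≤ s) :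
    g p (x + s) - g p x ≤ 2 ^ (1 - p) * s ^ p := by
  have h2 : s ^ p ≤ 2 ^ (1 - p) * s ^ p :=
    le_mul_of_one_le_left (by positivity) (one_le_two hp1)
  rcases le_total 0 x with hx | hx
  · rw [g_of_nonneg hp hx, g_of_nonneg hp (by linarith)]
    have := subadd hp.le hp1 hx hs
    linarith
  · have e : g p x = -(-x) ^ p := by
      rw [← g_of_nonneg hp (by linarith), g_neg, neg_neg]
    rcases le_total 0 (x + s) with hxs | hxs
    · rw [e, g_of_nonneg hp hxs]
      have := conc hp.le hp1 hxs (neg_nonneg.mpr hx)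
      rw [show x + s + -x = s by ring] at this
      linarith
    · have e' : g p (x + s) = -(-(x + s)) ^ p := by
        rw [← g_of_nonneg hp (by linarith), g_neg, neg_neg]
      rw [e, e']
      have := subadd hp.le hp1 (neg_nonneg.mpr hxs) hs
      rw [show -(x + s) + s = -x by ring] at this
      linarith

lemma key_pos {p : ℝ} (hp : 0 < p) (hp1 : p ≤ 1) (x : ℝ) {s : ℝ} (hs : 0 ≤ s) :
    |x + s| ^ (1 + p) ≤ |x| ^ (1 + p) + (1 + p) * (g p x * s) + 2 ^ (1 - p) * |s| ^ (1 + p) := by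
  let h : ℝ → ℝ := fun s =>
    |x + s| ^ (1 + p) - (1 + p) * (g p x * s) - 2 ^ (1 - p) * |s| ^ (1 + p)
  have hd : ∀ s, HasDerivAt h
      ((1 + p) * g p (x + s) - (1 + p) * g p x - 2 ^ (1 - p) * ((1 + p) * g p s)) s := by
    intro s
    have h0 : ∀ y, HasDerivAt (fun x : ℝ => |x| ^ (1 + p)) ((1 + p) * g p y) y := by
      intro y
      have := hasDerivAt_abs_rpow y (p := 1 + p) (by linarith)
      rw [show 1 + p - 2 = p - 1 by ring, mul_assoc] at this
      exact this
    have h1 : HasDerivAt (fun s => |x + s| ^ (1 + p)) ((1 + p) * g p (x + s)) s :=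
      HasDerivAt.comp_const_add x s (h0 (x + s))
    have h2 : HasDerivAt (fun s => (1 + p) * (g p x * s)) ((1 + p) * g p x) s := by
      simpa using ((hasDerivAt_id s).const_mul (g p x)).const_mul (1 + p)
    exact (h1.sub h2).sub ((h0 s).const_mul _)
  have hanti : AntitoneOn h (Set.Ici 0) := by
    refine antitoneOn_of_deriv_nonpos (convex_Ici 0)
      (fun s _ => (hd s).continuousAt.continuousWithinAt)
      (fun s _ => (hd s).differentiableAt.differentiableWithinAt) ?_
    intro s hs
    rw [interior_Ici] at hs
    rw [(hd s).deriv, g_of_pos hs]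
    have := holder hp hp1 x (le_of_lt hs)
    have : 0 ≤ (1 + p) * (2 ^ (1 - p) * s ^ p - (g p (x + s) - g p x)) :=
      mul_nonneg (by linarith) (by linarith)
    linarith
  have := hanti (Set.mem_Ici.mpr le_rfl) (Set.mem_Ici.mpr hs) hs
  simp only [h, add_zero, mul_zero, sub_zero, abs_zero,
    Real.zero_rpow (show 1 + p ≠ 0 by linarith)] at this
  linarith

lemma key {p : ℝ} (hp : 0 ≤ p) (hp1 : p ≤ 1) (x y : ℝ) :
    |x + y| ^ (1 + p) ≤ |x| ^ (1 + p) + (1 + p) * (g p x * y) + 2 ^ (1 - p) * |y| ^ (1 + p) := by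
  rcases hp.eq_or_lt with rfl | hp
  · have h1 := abs_g_le (p := 0) x
    rw [Real.rpow_zero] at h1
    have h2 : |g 0 x * y| ≤ |y| := by
      rw [abs_mul]; exact mul_le_of_le_one_left (abs_nonneg y) h1
    have h3 := neg_abs_le (g 0 x * y)
    simp only [add_zero, Real.rpow_one, sub_zero, one_mul]
    have := abs_add_le x y
    linarith
  · rcases le_total 0 y with hy | hy
    · exact key_pos hp hp1 x hy
    · have := key_pos hp hp1 (-x) (neg_nonneg.mpr hy)
      rwa [← neg_add, abs_neg, abs_neg, abs_neg, g_neg, neg_mul_neg] at this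

lemma young {p : ℝ} (hp : 0 ≤ p) (a b : ℝ) :
    |g p a * b| ≤ |a| ^ (1 + p) + |b| ^ (1 + p) := by
  rw [abs_mul]
  have h0 := mul_le_mul_of_nonneg_right (abs_g_le (p := p) a) (abs_nonneg b)
  have e : ∀ c : ℝ, |c| ^ (1 + p) = |c| ^ p * |c| := by
    intro c
    rw [add_comm, Real.rpow_add' (abs_nonneg c) (by linarith), Real.rpow_one]
  have ha : 0 ≤ |a| ^ (1 + p) := by positivity
  have hb : 0 ≤ |b| ^ (1 + p) := by positivity
  rcases le_total (|a|) (|b|) with h | h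
  · have : |a| ^ p * |b| ≤ |b| ^ p * |b| := by gcongr
    rw [← e] at this; linarith
  · have : |a| ^ p * |b| ≤ |a| ^ p * |a| := by gcongr
    rw [← e] at this; linarith

lemma sub_bound {p : ℝ} (hp : 0 ≤ p) (a b : ℝ) :
    |a - b| ^ (1 + p) ≤ 2 ^ p * (|a| ^ (1 + p) + |b| ^ (1 + p)) := by
  have h1 : |a - b| ^ (1 + p) ≤ (|a| + |b|) ^ (1 + p) := by
    gcongr; exact abs_sub a b
  have h2 : (|a| + |b|) ^ (1 + p) ≤ 2 ^ p * (|a| ^ (1 + p) + |b| ^ (1 + p)) := by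
    have := NNReal.rpow_add_le_mul_rpow_add_rpow ⟨|a|, abs_nonneg a⟩ ⟨|b|, abs_nonneg b⟩
      (p := 1 + p) (by linarith)
    rw [show 1 + p - 1 = p by ring] at this
    exact_mod_cast this
  exact h1.trans h2

end MMB

open MMB

/-- for `p ∈ [0,1]` and a real-valued martingale `{S_t}` with `S_0 = 0` and
`E[|S_t|^{1+p}] < ∞` for every `t`, setting `X_i = S_i − S_{i−1}`, one has
`E[|S_t|^{1+p}] ≤ 2^{1−p} Σ_{i=1}^t E[|X_i|^{1+p}]`. -/
theorem martingale_moment_bound_real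
    {Ω : Type} {m0 : MeasurableSpace Ω} {P : Measure Ω} [IsProbabilityMeasure P]
    (ℱ : Filtration ℕ m0) (p : ℝ) (hp : p ∈ Set.Icc (0 : ℝ) 1)
    (S : ℕ → Ω → ℝ) (hmart : Martingale S ℱ P) (hS0 : ∀ ω, S 0 ω = 0)
    (hint : ∀ t, Integrable (fun ω => |S t ω| ^ (1 + p)) P) (t : ℕ) :
    ∫ ω, |S t ω| ^ (1 + p) ∂P ≤
      2 ^ (1 - p) * ∑ i ∈ Finset.range t, ∫ ω, |S (i + 1) ω - S i ω| ^ (1 + p) ∂P := by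
  obtain ⟨hp0, hp1⟩ := hp
  induction t with
  | zero => simp [hS0, Real.zero_rpow (show 1 + p ≠ 0 by linarith)]
  | succ t ih =>
    have hXint : Integrable (S (t + 1) - S t) P :=
      (hmart.integrable (t + 1)).sub (hmart.integrable t)
    have hXp : Integrable (fun ω => |S (t + 1) ω - S t ω| ^ (1 + p)) P := by
      refine (((hint (t + 1)).add (hint t)).const_mul (2 ^ p)).mono' ?_ ?_
      · have : AEMeasurable (fun ω => S (t + 1) ω - S t ω) P := hXint.aemeasurable
        have h2 : AEMeasurable (fun ω => |S (t + 1) ω - S t ω|) P := this.norm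
        exact (h2.pow_const (1 + p)).aestronglyMeasurable
      · refine Eventually.of_forall fun ω => ?_
        rw [Real.norm_eq_abs, abs_of_nonneg (by positivity)]
        exact sub_bound hp0 _ _
    have hgm : StronglyMeasurable[ℱ t] (fun ω => g p (S t ω)) := by
      have h1 : Measurable (g p) := by unfold g; fun_prop
      exact (h1.comp (hmart.stronglyAdapted t).measurable).stronglyMeasurable
    have hgX : Integrable ((fun ω => g p (S t ω)) * (S (t + 1) - S t)) P := by
      refine ((hint t).add hXp).mono' ?_ ?_
      · exact (hgm.mono (ℱ.le t)).aestronglyMeasurable.mul hXint.aestronglyMeasurable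
      · refine Eventually.of_forall fun ω => ?_
        exact young hp0 _ _
    have hzero : ∫ ω, g p (S t ω) * (S (t + 1) ω - S t ω) ∂P = 0 := by
      have h1 := condExp_mul_of_stronglyMeasurable_left hgm hgX hXint
      have h2 := condExp_sub (hmart.integrable (t + 1)) (hmart.integrable t) (ℱ t)
      have h3 := hmart.condExp_ae_eq (Nat.le_succ t)
      have h4 := hmart.condExp_ae_eq (le_refl t)
      have h5 : P[(fun ω => g p (S t ω)) * (S (t + 1) - S t) | ℱ t] =ᵐ[P] 0 := by
        filter_upwards [h1, h2, h3, h4] with ω a b c d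
        rw [a, Pi.mul_apply, b, Pi.sub_apply, c, d]; simp
      have h6 := integral_condExp (μ := P) (f := (fun ω => g p (S t ω)) * (S (t + 1) - S t))
        (ℱ.le t)
      rw [integral_congr_ae h5] at h6
      simpa using h6.symm
    have hgX' : Integrable (fun ω => g p (S t ω) * (S (t + 1) ω - S t ω)) P := hgX
    have hmain : ∫ ω, |S (t + 1) ω| ^ (1 + p) ∂P ≤
        ∫ ω, (|S t ω| ^ (1 + p) + (1 + p) * (g p (S t ω) * (S (t + 1) ω - S t ω))
          + 2 ^ (1 - p) * |S (t + 1) ω - S t ω| ^ (1 + p)) ∂P := by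
      refine integral_mono (hint _) (((hint t).add (hgX'.const_mul _)).add (hXp.const_mul _)) ?_
      intro ω
      have := key hp0 hp1 (S t ω) (S (t + 1) ω - S t ω)
      rwa [add_sub_cancel] at this
    have hsum : Integrable (fun ω => |S t ω| ^ (1 + p)
        + (1 + p) * (g p (S t ω) * (S (t + 1) ω - S t ω))) P :=
      (hint t).add (hgX'.const_mul _)
    rw [integral_add hsum (hXp.const_mul _),
      integral_add (hint t) (hgX'.const_mul _), integral_const_mul, integral_const_mul,
      hzero] at hmain
    rw [Finset.sum_range_succ, mul_add]
    linarith
end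

section
/- Let p ∈ [1, 2]. For any vectors x, y ∈ ℝ^n, ‖x + y‖_p^p ≤ ‖x‖_p^p + 4‖y‖_p^p + p · y⊤ x^{⟨p−1⟩}. -/
open Matrix

/-- The signed entrywise power `v^{⟨q⟩}`: `(v^{⟨q⟩})_i = sgn(v_i)|v_i|^q`. -/
noncomputable def signedPow {n : ℕ} (q : ℝ) (v : Fin n → ℝ) : Fin n → ℝ :=
  fun i => Real.sign (v i) * |v i| ^ q

/-- The `p`-norm `‖v‖_p = (Σ_i |v_i|^p)^{1/p}` on `ℝ^n`. -/
noncomputable def pNorm {n : ℕ} (p : ℝ) (v : Fin n → ℝ) : ℝ :=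
  (∑ i, |v i| ^ p) ^ (1 / p)

lemma scalar_pos_aux (p a b : ℝ) (h1 : 1 ≤ p) (h2 : p ≤ 2) (ha : 0 < a) :
    |a + b| ^ p ≤ a ^ p + 4 * |b| ^ p + p * (b * a ^ (p - 1)) := by
  have hsplit : ∀ t : ℝ, 0 < t → t ^ p = t * t ^ (p - 1) := by
    intro t ht
    rw [Real.rpow_sub_one ht.ne']
    field_simp
  have hap : 0 < a ^ p := Real.rpow_pos_of_pos ha _
  rcases le_or_gt (a + b) 0 with h | h
  · have hc : 0 < -b := by linarith
    have hb : |b| = -b := abs_of_neg (by linarith)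
    have e1 : |a + b| ^ p ≤ (-b) ^ p := by
      apply Real.rpow_le_rpow (abs_nonneg _) _ (by linarith)
      rw [abs_of_nonpos h]; linarith
    have e2 : a ^ (p - 1) ≤ (-b) ^ (p - 1) :=
      Real.rpow_le_rpow ha.le (by linarith) (by linarith)
    have e3 : (-b) * a ^ (p - 1) ≤ (-b) ^ p := by
      rw [hsplit _ hc]
      exact mul_le_mul_of_nonneg_left e2 hc.le
    have e4 : 0 < (-b) ^ p := Real.rpow_pos_of_pos hc _
    rw [hb]
    nlinarith [mul_le_mul_of_nonneg_left e3 (by linarith : 0 ≤ p)]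
  · rw [abs_of_pos h]
    obtain ⟨s, hs⟩ : ∃ s, s = a + b := ⟨_, rfl⟩
    rw [← hs] at h ⊢
    have hb : b = s - a := by linarith
    have t1 : s ^ p ≤ a ^ p + p * ((s - a) * s ^ (p - 1)) := by
      have h3 := one_add_mul_self_le_rpow_one_add (s := a / s - 1)
        (by have := div_pos ha h; linarith) h1
      have h4 : 1 + (a / s - 1) = a / s := by ring
      rw [h4, Real.div_rpow ha.le h.le] at h3
      have hsp : 0 < s ^ p := Real.rpow_pos_of_pos h _
      rw [le_div_iff₀ hsp] at h3
      have h5 : (1 + p * (a / s - 1)) * s ^ p = s ^ p - p * ((s - a) * s ^ (p - 1)) := by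
        rw [hsplit s h]; field_simp; ring
      linarith
    have t2 : b * (s ^ (p - 1) - a ^ (p - 1)) ≤ |b| ^ p := by
      rcases lt_trichotomy b 0 with hb0 | hb0 | hb0
      · rw [abs_of_neg hb0, hsplit (-b) (by linarith)]
        have := Real.rpow_add_le_add_rpow (p := p - 1) h.le (by linarith : 0 ≤ -b)
          (by linarith) (by linarith)
        rw [show s + -b = a by linarith] at this
        nlinarith
      · rw [hb0]; simp; positivity
      · rw [abs_of_pos hb0, hsplit b hb0]
        have := Real.rpow_add_le_add_rpow (p := p - 1) ha.le hb0.le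
          (by linarith) (by linarith)
        rw [← hs] at this
        nlinarith
    rw [← hb] at t1
    have t3 : 0 ≤ |b| ^ p := by positivity
    nlinarith [mul_le_mul_of_nonneg_left t2 (by linarith : 0 ≤ p)]

lemma scalar_aux (p a b : ℝ) (h1 : 1 ≤ p) (h2 : p ≤ 2) :
    |a + b| ^ p ≤ |a| ^ p + 4 * |b| ^ p + p * (b * (Real.sign a * |a| ^ (p - 1))) := by
  rcases lt_trichotomy a 0 with ha | ha | ha
  · have := scalar_pos_aux p (-a) (-b) h1 h2 (by linarith)
    rw [← neg_add, abs_neg, abs_neg] at this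
    rw [Real.sign_of_neg ha, abs_of_neg ha]
    linarith
  · subst ha
    have t3 : 0 ≤ |b| ^ p := by positivity
    simp [Real.zero_rpow (by linarith : p ≠ 0)]
    linarith
  · have := scalar_pos_aux p a b h1 h2 ha
    rw [Real.sign_of_pos ha, abs_of_pos ha, one_mul]
    exact this

lemma pNorm_rpow_aux {n : ℕ} (p : ℝ) (h1 : 1 ≤ p) (v : Fin n → ℝ) :
    pNorm p v ^ p = ∑ i, |v i| ^ p := by
  unfold pNorm
  rw [← Real.rpow_mul (Finset.sum_nonneg fun i _ => by positivity),
    one_div_mul_cancel (by linarith), Real.rpow_one]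

/-- for `p ∈ [1,2]` and `x, y ∈ ℝ^n`,
`‖x + y‖_p^p ≤ ‖x‖_p^p + 4‖y‖_p^p + p · y⊤ x^{⟨p−1⟩}`. -/
theorem pnorm_pow_add_le {n : ℕ} (p : ℝ) (hp : p ∈ Set.Icc (1 : ℝ) 2) (x y : Fin n → ℝ) :
    pNorm p (x + y) ^ p ≤ pNorm p x ^ p + 4 * pNorm p y ^ p + p * (y ⬝ᵥ signedPow (p - 1) x) := by
  rw [pNorm_rpow_aux p hp.1, pNorm_rpow_aux p hp.1, pNorm_rpow_aux p hp.1, dotProduct,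
    Finset.mul_sum, Finset.mul_sum, ← Finset.sum_add_distrib, ← Finset.sum_add_distrib]
  exact Finset.sum_le_sum fun i _ => scalar_aux p (x i) (y i) hp.1 hp.2
end

section
/- For every p ∈ [1, 2] and every real number a, the inequality |1 + a|^p ≤ 1 + ap + 4|a|^p holds; consequently, for any real x, y and p ∈ [1, 2], |x + y|^p ≤ |x|^p + p·y·|x|^{p−1}·sgn(x) + 4|y|^p. -/
theorem aux_first (p : ℝ) (h1 : 1 ≤ p) (h2 : p ≤ 2) (a : ℝ) :
    |1 + a| ^ p ≤ 1 + a * p + 4 * |a| ^ p := by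
  have hp0 : 0 ≤ p := by linarith
  have hnn : 0 ≤ |a| ^ p := Real.rpow_nonneg (abs_nonneg a) p
  rcases le_total |a| 1 with ha | ha
  · obtain ⟨hl, hr⟩ := abs_le.mp ha
    have hu : 0 ≤ 1 + a := by linarith
    have hB : (1 + a) ^ (p - 1) ≤ 1 + (p - 1) * a :=
      rpow_one_add_le_one_add_mul_self hl (by linarith) (by linarith)
    have hsq : a ^ 2 ≤ |a| ^ p := by
      rcases eq_or_ne a 0 with h0 | h0
      · subst h0
        simpa using hnn
      · have := Real.rpow_le_rpow_of_exponent_ge (abs_pos.mpr h0) ha h2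
        rwa [Real.rpow_two, sq_abs] at this
    have hm : |1 + a| ^ p = (1 + a) * (1 + a) ^ (p - 1) := by
      rw [abs_of_nonneg hu]
      have := Real.rpow_add' hu (y := 1) (z := p - 1) (by linarith)
      rw [Real.rpow_one] at this
      rw [← this]
      congr 1
      ring
    rw [hm]
    nlinarith [mul_le_mul_of_nonneg_left hB hu, mul_nonneg (sub_nonneg.mpr h2) (sq_nonneg a)]
  · have hta : |a| ≤ |a| ^ p := by
      simpa using Real.rpow_le_rpow_of_exponent_le ha h1
    rcases le_total 0 a with h | h
    · have e1 : |1 + a| ^ p ≤ (2 * |a|) ^ p :=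
        Real.rpow_le_rpow (abs_nonneg _) (by
          rw [abs_of_nonneg h] at *
          rw [abs_of_nonneg (by linarith)]; linarith) hp0
      rw [Real.mul_rpow (by norm_num) (abs_nonneg a)] at e1
      have e2 : (2 : ℝ) ^ p ≤ 4 := by
        have := Real.rpow_le_rpow_of_exponent_le (x := 2) (by norm_num) h2
        rw [Real.rpow_two] at this
        linarith
      nlinarith [mul_le_mul_of_nonneg_right e2 hnn, mul_nonneg h hp0]
    · have e1 : |1 + a| ^ p ≤ |a| ^ p :=
        Real.rpow_le_rpow (abs_nonneg _) (by
          rw [abs_of_nonpos h] at *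
          rw [abs_of_nonpos (by linarith)]; linarith) hp0
      have e3 : -a ≤ |a| := neg_le_abs a
      nlinarith [mul_nonneg (neg_nonneg.mpr h) (sub_nonneg.mpr h2)]

/-- For every `p ∈ [1, 2]` and every real `a`, `|1 + a|^p ≤ 1 + ap + 4|a|^p`;
consequently, for any real `x, y` and `p ∈ [1, 2]`,
`|x + y|^p ≤ |x|^p + p·y·|x|^{p−1}·sgn(x) + 4|y|^p`. -/
theorem abs_pow_add_ineq (p : ℝ) (hp : p ∈ Set.Icc (1 : ℝ) 2) :
    (∀ a : ℝ, |1 + a| ^ p ≤ 1 + a * p + 4 * |a| ^ p) ∧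
    (∀ x y : ℝ, |x + y| ^ p ≤ |x| ^ p + p * y * |x| ^ (p - 1) * Real.sign x + 4 * |y| ^ p) := by
  obtain ⟨h1, h2⟩ := hp
  refine ⟨aux_first p h1 h2, fun x y => ?_⟩
  rcases eq_or_ne x 0 with h0 | h0
  · subst h0
    have hnn : 0 ≤ |y| ^ p := Real.rpow_nonneg (abs_nonneg y) p
    rw [abs_zero, Real.zero_rpow (by linarith), Real.sign_zero, zero_add]
    linarith
  · have hx : 0 < |x| := abs_pos.mpr h0
    have key := mul_le_mul_of_nonneg_left (aux_first p h1 h2 (y / x))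
      (Real.rpow_nonneg hx.le p)
    have e1 : |x| ^ p * |1 + y / x| ^ p = |x + y| ^ p := by
      rw [← Real.mul_rpow hx.le (abs_nonneg _), ← abs_mul]
      congr 2
      field_simp
    have e2 : |x| ^ p * |y / x| ^ p = |y| ^ p := by
      rw [← Real.mul_rpow hx.le (abs_nonneg _), ← abs_mul]
      congr 2
      field_simp
    have e3 : |x| ^ p * (y / x) = y * |x| ^ (p - 1) * Real.sign x := by
      rw [Real.rpow_sub_one hx.ne']
      rcases lt_or_gt_of_ne h0 with h | h
      · rw [Real.sign_of_neg h, abs_of_neg h]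
        field_simp
      · rw [Real.sign_of_pos h, abs_of_pos h]
        field_simp
    rw [e1] at key
    calc |x + y| ^ p ≤ _ := key
      _ = |x| ^ p + p * (|x| ^ p * (y / x)) + 4 * (|x| ^ p * |y / x| ^ p) := by ring
      _ = _ := by rw [e2, e3]; ring
end

section
/- Let p ∈ [1, 2]. Every non-empty set M of symmetric n×n matrices that is uniformly diagonally dominant with non-negative diagonal is uniformly p-PD. -/
open Matrix Finset

/-- `Q` is `p`-positive definite: `v⊤ Q v^{⟨p−1⟩} > 0` for every `v` with `‖v‖_p = 1`. -/
def PPosDef {n : ℕ} (p : ℝ) (Q : Matrix (Fin n) (Fin n) ℝ) : Prop :=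
  ∀ v : Fin n → ℝ, pNorm p v = 1 → 0 < v ⬝ᵥ Q.mulVec (signedPow (p - 1) v)

/-- `M` is uniformly `p`-positive definite: every matrix in the closure of `M` is `p`-PD. -/
def UnifPPosDef {n : ℕ} (p : ℝ) (M : Set (Matrix (Fin n) (Fin n) ℝ)) : Prop :=
  ∀ Q ∈ closure M, PPosDef p Q

/-- `M` is uniformly diagonally dominant with non-negative diagonal:
`inf_{Q ∈ M} min_i (q_{ii} − Σ_{j≠i}|q_{ij}|) > 0`. -/
def UnifDiagDom {n : ℕ} (M : Set (Matrix (Fin n) (Fin n) ℝ)) : Prop :=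
  ∃ ε : ℝ, 0 < ε ∧ ∀ Q ∈ M, ∀ i, ε ≤ Q i i - ∑ j ∈ Finset.univ.erase i, |Q i j|

/-- for `p ∈ [1,2]`, every non-empty set of symmetric matrices that is
uniformly diagonally dominant with non-negative diagonal is uniformly `p`-PD. -/
theorem unifDiagDom_unifPPosDef {n : ℕ} (p : ℝ) (hp : p ∈ Set.Icc (1 : ℝ) 2)
    (M : Set (Matrix (Fin n) (Fin n) ℝ)) (hne : M.Nonempty)
    (hsymm : ∀ Q ∈ M, Q.IsSymm) (hdd : UnifDiagDom M) :
    UnifPPosDef p M := by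
  intro Q hQ v hv
  obtain ⟨ε, hε, hM⟩ := hdd
  have hp1 : 1 ≤ p := hp.1
  -- the hypotheses pass to the closure
  have hS : ∀ i j, Q i j = Q j i := by
    have hc : IsClosed {A : Matrix (Fin n) (Fin n) ℝ | ∀ i j, A i j = A j i} := by
      simp only [Set.ofPred_forall]
      refine isClosed_iInter fun i => isClosed_iInter fun j => ?_
      exact isClosed_eq (by fun_prop) (by fun_prop)
    exact closure_minimal (fun A hA i j => (hsymm A hA).apply j i) hc hQ
  have hD : ∀ i, ε ≤ Q i i - ∑ j ∈ Finset.univ.erase i, |Q i j| := by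
    have hc : IsClosed {A : Matrix (Fin n) (Fin n) ℝ |
        ∀ i, ε ≤ A i i - ∑ j ∈ Finset.univ.erase i, |A i j|} := by
      simp only [Set.ofPred_forall]
      refine isClosed_iInter fun i => ?_
      exact isClosed_le (by fun_prop) (by fun_prop)
    exact closure_minimal (fun A hA => hM A hA) hc hQ
  set s := signedPow (p - 1) v with hs
  have hc : ∀ i, v i * s i = |v i| * |s i| ∧ |v i| * |s i| = |v i| ^ p := by
    intro i
    have hpow : v i ≠ 0 → |v i| * |v i| ^ (p - 1) = |v i| ^ p := by
      intro h
      have h0 : 0 < |v i| := abs_pos.mpr h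
      rw [Real.rpow_sub_one h0.ne']
      field_simp
    have hnn : 0 ≤ |v i| ^ (p - 1) := Real.rpow_nonneg (abs_nonneg _) _
    rcases lt_trichotomy (v i) 0 with h | h | h
    · have hsi : s i = - |v i| ^ (p - 1) := by simp [hs, signedPow, Real.sign_of_neg h]
      rw [hsi, abs_neg, abs_of_nonneg hnn]
      refine ⟨?_, hpow h.ne⟩
      rw [abs_of_neg h]
      ring
    · have : p ≠ 0 := by linarith
      simp [h, Real.zero_rpow this]
    · have hsi : s i = |v i| ^ (p - 1) := by simp [hs, signedPow, Real.sign_of_pos h]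
      rw [hsi, abs_of_nonneg hnn]
      refine ⟨?_, hpow h.ne'⟩
      rw [abs_of_pos h]
  have hb : ∀ i, v i ≠ 0 → |s i| = |v i| ^ (p - 1) := by
    intro i h
    have hnn : 0 ≤ |v i| ^ (p - 1) := Real.rpow_nonneg (abs_nonneg _) _
    rcases lt_or_gt_of_ne h with h | h
    · simp [hs, signedPow, Real.sign_of_neg h, abs_of_nonneg hnn]
    · simp [hs, signedPow, Real.sign_of_pos h, abs_of_nonneg hnn]
  have hmono : ∀ i j, |v i| ≤ |v j| → |s i| ≤ |s j| := by
    intro i j hij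
    by_cases hi : v i = 0
    · have : s i = 0 := by simp [hs, signedPow, hi]
      simp [this]
    · have hj : v j ≠ 0 := by
        have := abs_pos.mpr hi
        exact abs_pos.mp (by linarith)
      rw [hb i hi, hb j hj]
      exact Real.rpow_le_rpow (abs_nonneg _) hij (by linarith)
  have hre : ∀ i j, |v i| * |s j| + |v j| * |s i| ≤ |v i| * |s i| + |v j| * |s j| := by
    intro i j
    rcases le_total |v i| |v j| with h | h
    · nlinarith [hmono i j h]
    · nlinarith [hmono j i h]
  let R : Fin n → Fin n → ℝ := fun i j => if i = j then 0 else |Q i j|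
  have hR0 : ∀ i j, 0 ≤ R i j := by
    intro i j
    by_cases h : i = j <;> simp [R, h]
  have hRs : ∀ i j, R i j = R j i := by
    intro i j
    simp only [R, hS i j, eq_comm]
  have hRsum : ∀ i, ∑ j, R i j = ∑ j ∈ Finset.univ.erase i, |Q i j| := by
    intro i
    rw [← Finset.add_sum_erase _ _ (Finset.mem_univ i)]
    simp only [R, if_true, zero_add]
    refine Finset.sum_congr rfl fun j hj => ?_
    rw [if_neg (Finset.ne_of_mem_erase hj).symm]
  have hkey : ∑ i, ∑ j, R i j * (|v i| * |s j|) ≤ ∑ i, ∑ j, R i j * (|v i| * |s i|) := by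
    have e1 : ∑ i, ∑ j, R i j * (|v i| * |s j|) = ∑ i, ∑ j, R i j * (|v j| * |s i|) := by
      rw [Finset.sum_comm]
      exact Finset.sum_congr rfl fun i _ => Finset.sum_congr rfl fun j _ => by rw [hRs]
    have e2 : ∑ i, ∑ j, R i j * (|v i| * |s i|) = ∑ i, ∑ j, R i j * (|v j| * |s j|) := by
      rw [Finset.sum_comm]
      exact Finset.sum_congr rfl fun i _ => Finset.sum_congr rfl fun j _ => by rw [hRs]
    have e3 : ∑ i, ∑ j, R i j * (|v i| * |s j|) + ∑ i, ∑ j, R i j * (|v j| * |s i|)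
        ≤ ∑ i, ∑ j, R i j * (|v i| * |s i|) + ∑ i, ∑ j, R i j * (|v j| * |s j|) := by
      simp only [← Finset.sum_add_distrib, ← mul_add]
      exact Finset.sum_le_sum fun i _ => Finset.sum_le_sum fun j _ =>
        mul_le_mul_of_nonneg_left (hre i j) (hR0 i j)
    linarith
  have hpt : ∑ i, ∑ j, ((if i = j then Q i i * (|v i| * |s i|) else 0)
      - R i j * (|v i| * |s j|)) ≤ v ⬝ᵥ Q.mulVec s := by
    simp only [dotProduct, mulVec, Finset.mul_sum]
    refine Finset.sum_le_sum fun i _ => Finset.sum_le_sum fun j _ => ?_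
    by_cases h : i = j
    · subst h
      simp only [R, if_true, ← (hc i).1]
      apply le_of_eq
      ring
    · simp only [R, if_neg h]
      have := neg_abs_le (v i * (Q i j * s j))
      rw [abs_mul, abs_mul] at this
      linarith
  have hsum : ∑ i, |v i| ^ p = 1 := by
    have h0 : 0 ≤ ∑ i, |v i| ^ p :=
      Finset.sum_nonneg fun i _ => Real.rpow_nonneg (abs_nonneg _) _
    unfold pNorm at hv
    have h1 : 1 / p ≠ 0 := by positivity
    exact (Real.rpow_left_inj h0 zero_le_one h1).mp (by rw [hv, Real.one_rpow])
  have hlow : ε ≤ ∑ i, (Q i i * (|v i| * |s i|) - ∑ j, R i j * (|v i| * |s i|)) := by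
    calc ε = ∑ i, ε * |v i| ^ p := by rw [← Finset.mul_sum, hsum, mul_one]
      _ ≤ _ := by
        refine Finset.sum_le_sum fun i _ => ?_
        rw [← Finset.sum_mul, hRsum, ← sub_mul, (hc i).2]
        exact mul_le_mul_of_nonneg_right (hD i) (Real.rpow_nonneg (abs_nonneg _) _)
  simp only [Finset.sum_sub_distrib, Finset.sum_ite_eq, Finset.mem_univ, if_true] at hpt hlow
  linarith
end

section
/- Let p ∈ [1, 2]. Every non-empty bounded set M of symmetric n×n matrices that is uniformly p-PD is uniformly 2-PD; equivalently, there exists λ > 0 such that the smallest eigenvalue of every Q ∈ M is at least λ. -/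
open Matrix

theorem aux_mul_sign (p x : ℝ) (hp : 1 ≤ p) :
    x * (Real.sign x * |x| ^ (p - 1)) = |x| ^ p := by
  by_cases hx : x = 0
  · subst hx
    simp [Real.zero_rpow (by linarith : p ≠ 0)]
  · have h1 : x * Real.sign x = |x| := by
      rcases lt_or_gt_of_ne hx with h | h
      · rw [Real.sign_of_neg h, abs_of_neg h]; ring
      · rw [Real.sign_of_pos h, abs_of_pos h]; ring
    have hpos : 0 < |x| := abs_pos.mpr hx
    rw [← mul_assoc, h1, Real.rpow_sub_one hpos.ne']
    field_simp

theorem aux_dot {n : ℕ} (p : ℝ) (hp : 1 ≤ p) (v : Fin n → ℝ) :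
    v ⬝ᵥ signedPow (p - 1) v = ∑ i, |v i| ^ p := by
  simp only [dotProduct, signedPow]
  exact Finset.sum_congr rfl fun i _ => aux_mul_sign p (v i) hp

theorem aux_eig {n : ℕ} (p : ℝ) (hp : 1 ≤ p) (Q : Matrix (Fin n) (Fin n) ℝ)
    (hs : Q.IsSymm) (h : PPosDef p Q) (v : Fin n → ℝ) (hv : v ≠ 0) (l : ℝ)
    (hl : Q.mulVec v = l • v) : 0 < l := by
  have hS : 0 < ∑ i, |v i| ^ p := by
    obtain ⟨i, hi⟩ := Function.ne_iff.mp hv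
    exact Finset.sum_pos' (fun i _ => by positivity)
      ⟨i, Finset.mem_univ _, Real.rpow_pos_of_pos (abs_pos.mpr hi) _⟩
  set S := ∑ i, |v i| ^ p with hSdef
  set c : ℝ := (S ^ (1 / p))⁻¹ with hc
  have hcpos : 0 < c := by positivity
  have hsum : ∑ i, |(c • v) i| ^ p = 1 := by
    have : ∀ i, |(c • v) i| ^ p = c ^ p * |v i| ^ p := fun i => by
      rw [Pi.smul_apply, smul_eq_mul, abs_mul, abs_of_pos hcpos,
        Real.mul_rpow hcpos.le (abs_nonneg _)]
    rw [Finset.sum_congr rfl fun i _ => this i, ← Finset.mul_sum, ← hSdef, hc,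
      Real.inv_rpow (by positivity), ← Real.rpow_mul hS.le,
      one_div_mul_cancel (by linarith), Real.rpow_one, inv_mul_cancel₀ hS.ne']
  have key := h (c • v) (by rw [pNorm, hsum, Real.one_rpow])
  rw [dotProduct_mulVec, ← mulVec_transpose, hs.eq, mulVec_smul, hl, smul_comm,
    smul_dotProduct, aux_dot p hp, hsum] at key
  simpa using key

theorem aux_pos {n : ℕ} (p : ℝ) (hp : 1 ≤ p) (Q : Matrix (Fin n) (Fin n) ℝ)
    (hs : Q.IsSymm) (h : PPosDef p Q) (v : Fin n → ℝ) (hv : v ≠ 0) :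
    0 < v ⬝ᵥ Q.mulVec v := by
  have hH : Q.IsHermitian := by
    rw [Matrix.IsHermitian, conjTranspose_eq_transpose_of_trivial]; exact hs
  have hP : Q.PosDef := by
    rw [hH.posDef_iff_eigenvalues_pos]
    intro i
    refine aux_eig p hp Q hs h _ ?_ _ (hH.mulVec_eigenvectorBasis i)
    intro h0
    exact hH.eigenvectorBasis.orthonormal.ne_zero i (by ext j; exact congrFun h0 j)
  simpa using hP.dotProduct_mulVec_pos hv

/-- for `p ∈ [1,2]`, every non-empty bounded set of symmetric matrices that
is uniformly `p`-PD is uniformly `2`-PD; equivalently, there is `λ > 0` such that the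
smallest eigenvalue of every `Q ∈ M` is at least `λ`, i.e.
`v⊤ Q v ≥ λ |v|²` for all `v` and all `Q ∈ M`. -/
theorem unifPPosDef_unifTwoPPosDef {n : ℕ} (p : ℝ) (hp : p ∈ Set.Icc (1 : ℝ) 2)
    (M : Set (Matrix (Fin n) (Fin n) ℝ)) (hne : M.Nonempty)
    (hbdd : ∃ C : ℝ, ∀ Q ∈ M, ∀ i j, |Q i j| ≤ C)
    (hsymm : ∀ Q ∈ M, Q.IsSymm) (h : UnifPPosDef p M) :
    UnifPPosDef 2 M ∧
      ∃ lam : ℝ, 0 < lam ∧ ∀ Q ∈ M, ∀ v : Fin n → ℝ,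
        lam * (∑ i, v i ^ 2) ≤ v ⬝ᵥ Q.mulVec v := by
  have hp1 := hp.1
  have hsC : ∀ Q ∈ closure M, Q.IsSymm := by
    have hcl : IsClosed {Q : Matrix (Fin n) (Fin n) ℝ | Qᵀ = Q} :=
      isClosed_eq (by fun_prop) continuous_id
    exact fun Q hQ => closure_minimal (fun Q hQ => hsymm Q hQ) hcl hQ
  have hpos : ∀ Q ∈ closure M, ∀ v : Fin n → ℝ, v ≠ 0 → 0 < v ⬝ᵥ Q.mulVec v :=
    fun Q hQ v hv => aux_pos p hp1 Q (hsC Q hQ) (h Q hQ) v hv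
  refine ⟨?_, ?_⟩
  · intro Q hQ v hv
    have h1 : signedPow (2 - 1) v = v := by
      funext i
      simp only [signedPow]
      norm_num
      rcases lt_trichotomy (v i) 0 with h | h | h
      · rw [Real.sign_of_neg h, abs_of_neg h]; ring
      · simp [h]
      · rw [Real.sign_of_pos h, abs_of_pos h]; ring
    rw [h1]
    apply hpos Q hQ
    rintro rfl
    simp [pNorm] at hv
  · obtain ⟨C, hC⟩ := hbdd
    have hK : IsCompact (closure M) := by
      have hB : IsCompact (Set.univ.pi fun _ : Fin n => Set.univ.pi fun _ : Fin n =>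
          Set.Icc (-C) C) :=
        isCompact_univ_pi fun _ => isCompact_univ_pi fun _ => isCompact_Icc
      refine hB.of_isClosed_subset isClosed_closure (closure_minimal ?_ hB.isClosed)
      intro Q hQ i _ j _
      exact abs_le.mp (hC Q hQ i j)
    have hS : IsCompact {v : Fin n → ℝ | ∑ i, v i ^ 2 = 1} := by
      have hB : IsCompact (Set.univ.pi fun _ : Fin n => Set.Icc (-1 : ℝ) 1) :=
        isCompact_univ_pi fun _ => isCompact_Icc
      refine hB.of_isClosed_subset (isClosed_eq (by fun_prop) continuous_const) ?_
      intro v hv i _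
      have hv' : ∑ i, v i ^ 2 = 1 := hv
      have := Finset.single_le_sum (f := fun i => v i ^ 2) (fun i _ => sq_nonneg (v i))
        (Finset.mem_univ i)
      exact abs_le.mp ((sq_le_one_iff_abs_le_one _).mp (this.trans hv'.le))
    have hcont : Continuous fun x : Matrix (Fin n) (Fin n) ℝ × (Fin n → ℝ) =>
        x.2 ⬝ᵥ x.1.mulVec x.2 :=
      continuous_snd.dotProduct (continuous_fst.matrix_mulVec continuous_snd)
    obtain ⟨l, hl, hmin⟩ := (hK.prod hS).exists_forall_le' hcont.continuousOn (a := 0) (by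
      rintro ⟨Q, v⟩ ⟨hQ, hv⟩
      refine hpos Q hQ v ?_
      rintro rfl
      simp at hv)
    refine ⟨l, hl, fun Q hQ v => ?_⟩
    by_cases hv : v = 0
    · subst hv; simp
    have hT : 0 < ∑ i, v i ^ 2 := by
      obtain ⟨i, hi⟩ := Function.ne_iff.mp hv
      exact Finset.sum_pos' (fun i _ => sq_nonneg _)
        ⟨i, Finset.mem_univ _, sq_pos_of_ne_zero hi⟩
    set T := ∑ i, v i ^ 2 with hTd
    have hr : (Real.sqrt T)⁻¹ ^ 2 = T⁻¹ := by rw [inv_pow, Real.sq_sqrt hT.le]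
    have := hmin (Q, (Real.sqrt T)⁻¹ • v) ⟨subset_closure hQ, by
      simp only [Set.mem_setOf_eq, Pi.smul_apply, smul_eq_mul, mul_pow]
      rw [← Finset.mul_sum, hr, ← hTd, inv_mul_cancel₀ hT.ne']⟩
    simp only [mulVec_smul, smul_dotProduct, dotProduct_smul, smul_eq_mul] at this
    rw [← mul_assoc, ← pow_two, hr, inv_mul_eq_div, le_div_iff₀ hT] at this
    exact this
end

section
/- Let p ∈ [1, 2] and let Q = (q_{ij}) be a symmetric n×n real matrix. Then for every v ∈ ℝ^n, v⊤ Q v^{⟨p−1⟩} ≥ Σ_{i=1}^{n} |v^i|^p (q_{ii} − Σ_{j≠i} |q_{ij}|). In particular, if Q is diagonally dominant with non-negative diagonal (q_{ii} − Σ_{j≠i}|q_{ij}| > 0 for all i), then Q is p-positive definite. -/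
open Matrix Finset

/-- Elementary pairing inequality. -/
theorem pair_aux (p : ℝ) (hp : 1 ≤ p) (x y q : ℝ) :
    -(|x| ^ p * |q|) + -(|y| ^ p * |q|) ≤
      x * (q * (Real.sign y * |y| ^ (p - 1))) + y * (q * (Real.sign x * |x| ^ (p - 1))) := by
  have hpow : ∀ a : ℝ, 0 ≤ a → a ^ p = a * a ^ (p - 1) := by
    intro a ha
    rcases ha.eq_or_lt with h | h
    · rw [← h, Real.zero_rpow (by linarith), zero_mul]
    · rw [Real.rpow_sub_one h.ne']
      field_simp
  have hs : ∀ z : ℝ, |Real.sign z| ≤ 1 := by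
    intro z
    rcases Real.sign_apply_eq z with h | h | h <;> rw [h] <;> norm_num
  have hb : ∀ x y : ℝ, |x * (q * (Real.sign y * |y| ^ (p - 1)))| ≤ |q| * (|x| * |y| ^ (p - 1)) := by
    intro x y
    have h0 : 0 ≤ |y| ^ (p - 1) := Real.rpow_nonneg (abs_nonneg y) _
    rw [abs_mul, abs_mul, abs_mul, abs_of_nonneg h0]
    have h1 : |Real.sign y| * |y| ^ (p - 1) ≤ |y| ^ (p - 1) := mul_le_of_le_one_left h0 (hs y)
    calc |x| * (|q| * (|Real.sign y| * |y| ^ (p - 1))) ≤ |x| * (|q| * |y| ^ (p - 1)) := by gcongr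
      _ = _ := by ring
  have hm : 0 ≤ (|x| - |y|) * (|x| ^ (p - 1) - |y| ^ (p - 1)) := by
    rcases le_total |x| |y| with h | h
    · have := Real.rpow_le_rpow (abs_nonneg x) h (by linarith : 0 ≤ p - 1)
      exact mul_nonneg_of_nonpos_of_nonpos (by linarith) (by linarith)
    · have := Real.rpow_le_rpow (abs_nonneg y) h (by linarith : 0 ≤ p - 1)
      exact mul_nonneg (by linarith) (by linarith)
  have h1 := (abs_le.mp (hb x y)).1
  have h2 := (abs_le.mp (hb y x)).1
  have h3 := mul_nonneg (abs_nonneg q) hm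
  rw [hpow _ (abs_nonneg x), hpow _ (abs_nonneg y)]
  nlinarith

/-- The diagonal terms. -/
theorem diag_aux (p : ℝ) (hp : 1 ≤ p) (x q : ℝ) :
    x * (q * (Real.sign x * |x| ^ (p - 1))) = |x| ^ p * q := by
  rcases eq_or_ne x 0 with h | h
  · subst h
    rw [abs_zero, Real.zero_rpow (by linarith : p ≠ 0)]; ring
  · have hx : 0 < |x| := abs_pos.mpr h
    have hsx : x * Real.sign x = |x| := by
      rcases lt_or_gt_of_ne h with h | h
      · rw [Real.sign_of_neg h, abs_of_neg h]; ring
      · rw [Real.sign_of_pos h, abs_of_pos h]; ring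
    have : |x| ^ p = |x| * |x| ^ (p - 1) := by
      rw [Real.rpow_sub_one hx.ne']
      field_simp
    rw [this, ← hsx]
    rw [hsx]
    linear_combination (q * |x| ^ (p - 1)) * hsx

/-- for `p ∈ [1,2]` and symmetric `Q`,
`v⊤ Q v^{⟨p−1⟩} ≥ Σ_i |v_i|^p (q_{ii} − Σ_{j≠i}|q_{ij}|)`; in particular a diagonally
dominant matrix with non-negative diagonal is `p`-positive definite. -/
theorem diag_dominant_pPD {n : ℕ} (p : ℝ) (hp : p ∈ Set.Icc (1 : ℝ) 2)
    (Q : Matrix (Fin n) (Fin n) ℝ) (hQ : Q.IsSymm) :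
    (∀ v : Fin n → ℝ,
      (∑ i, |v i| ^ p * (Q i i - ∑ j ∈ Finset.univ.erase i, |Q i j|)) ≤
        v ⬝ᵥ Q.mulVec (signedPow (p - 1) v)) ∧
    ((∀ i, 0 < Q i i - ∑ j ∈ Finset.univ.erase i, |Q i j|) → PPosDef p Q) := by
  have main : ∀ v : Fin n → ℝ,
      (∑ i, |v i| ^ p * (Q i i - ∑ j ∈ Finset.univ.erase i, |Q i j|)) ≤
        v ⬝ᵥ Q.mulVec (signedPow (p - 1) v) := by
    intro v
    let F : Fin n → Fin n → ℝ := fun i j =>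
      v i * (Q i j * (Real.sign (v j) * |v j| ^ (p - 1)))
    let G : Fin n → Fin n → ℝ := fun i j =>
      if i = j then |v i| ^ p * Q i i else -(|v i| ^ p * |Q i j|)
    have hF : v ⬝ᵥ Q.mulVec (signedPow (p - 1) v) = ∑ i, ∑ j, F i j := by
      simp only [dotProduct, Matrix.mulVec, signedPow, Finset.mul_sum, F]
    have hG : (∑ i, |v i| ^ p * (Q i i - ∑ j ∈ Finset.univ.erase i, |Q i j|)) =
        ∑ i, ∑ j, G i j := by
      refine Finset.sum_congr rfl fun i _ => ?_
      rw [← Finset.add_sum_erase _ _ (Finset.mem_univ i)]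
      have h1 : ∑ j ∈ Finset.univ.erase i, G i j =
          ∑ j ∈ Finset.univ.erase i, -(|v i| ^ p * |Q i j|) :=
        Finset.sum_congr rfl fun j hj => if_neg (Finset.ne_of_mem_erase hj).symm
      have h2 : G i i = |v i| ^ p * Q i i := if_pos rfl
      rw [h1, h2, Finset.sum_neg_distrib, ← Finset.mul_sum]
      ring
    have hGF : ∀ i j, G i j + G j i ≤ F i j + F j i := by
      intro i j
      have hs : Q j i = Q i j := hQ.apply i j
      by_cases h : i = j
      · subst h
        simp only [G, F, if_true]
        rw [diag_aux p hp.1]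
      · simp only [G, F, if_neg h, if_neg (Ne.symm h), hs]
        exact pair_aux p hp.1 _ _ _
    have hsum : ∑ i, ∑ j, (G i j + G j i) ≤ ∑ i, ∑ j, (F i j + F j i) :=
      Finset.sum_le_sum fun i _ => Finset.sum_le_sum fun j _ => hGF i j
    simp only [Finset.sum_add_distrib] at hsum
    rw [Finset.sum_comm (f := fun i j => G j i), Finset.sum_comm (f := fun i j => F j i)] at hsum
    rw [hF, hG]
    linarith
  refine ⟨main, fun hd v hv => lt_of_lt_of_le ?_ (main v)⟩
  have hne : ∃ i, v i ≠ 0 := by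
    by_contra! h0
    have hp0 : p ≠ 0 := by linarith [hp.1]
    simp [pNorm, h0, Real.zero_rpow hp0, Real.zero_rpow (inv_ne_zero hp0)] at hv
  obtain ⟨i, hi⟩ := hne
  exact Finset.sum_pos' (fun j _ => mul_nonneg (Real.rpow_nonneg (abs_nonneg _) _) (hd j).le)
    ⟨i, Finset.mem_univ i, mul_pos (Real.rpow_pos_of_pos (abs_pos.mpr hi) _) (hd i)⟩
end

section
/- Let {γ_t} be a sequence of positive reals with γ_t ≍ t^{−ρ} for some ρ ∈ (0, 1), and let 0 < ρ < κ ≤ 1. Then for every λ > 0, lim_{t→∞} t^{−κ} Σ_{j=1}^{t−1} exp(−λ Σ_{i=j}^{t−1} γ_i) = 0. -/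
open Filter Topology

/-- if `γ_t ≍ t^{−ρ}` with `0 < ρ < κ ≤ 1`, then for every `λ > 0`,
`t^{−κ} Σ_{j=1}^{t−1} exp(−λ Σ_{i=j}^{t−1} γ_i) → 0` as `t → ∞`. -/
theorem exp_sum_stepsize_tendsto_zero (γ : ℕ → ℝ) (hγpos : ∀ t, 0 < γ t)
    (ρ κ : ℝ) (hρ0 : 0 < ρ) (hρ1 : ρ < 1)
    (c : ℝ) (hc : 0 < c)
    (hasymp : Tendsto (fun t : ℕ => γ t / (t : ℝ) ^ (-ρ)) atTop (𝓝 c))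
    (hκ : ρ < κ) (hκ1 : κ ≤ 1) (lam : ℝ) (hlam : 0 < lam) :
    Tendsto
      (fun t : ℕ => (t : ℝ) ^ (-κ) *
        ∑ j ∈ Finset.Ico 1 t, Real.exp (-lam * ∑ i ∈ Finset.Ico j t, γ i))
      atTop (𝓝 0) := by
  set S : ℕ → ℝ := fun t => ∑ j ∈ Finset.Ico 1 t, Real.exp (-lam * ∑ i ∈ Finset.Ico j t, γ i)
    with hS
  have hS0 : ∀ t, 0 ≤ S t := fun t => Finset.sum_nonneg fun j _ => (Real.exp_pos _).le
  have hrec : ∀ t, 1 ≤ t → S (t + 1) = (S t + 1) * Real.exp (-lam * γ t) := by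
    intro t ht
    simp only [hS]
    rw [Finset.sum_Ico_succ_top ht, add_mul, Finset.sum_mul]
    congr 1
    · refine Finset.sum_congr rfl fun j hj => ?_
      rw [Finset.sum_Ico_succ_top (Finset.mem_Ico.1 hj).2.le, ← Real.exp_add]
      ring_nf
    · simp
  obtain ⟨T, hT⟩ := eventually_atTop.1
    ((hasymp.eventually_const_lt (half_lt_self hc)).and (eventually_ge_atTop 1))
  have hT1 : 1 ≤ T := (hT T le_rfl).2
  have hb : 0 < lam * (c / 2) := by positivity
  set M : ℝ := 1 / (lam * (c / 2)) + S T with hM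
  have hM1 : 1 / (lam * (c / 2)) ≤ M := by have := hS0 T; linarith
  have hMpos : 0 < M := lt_of_lt_of_le (by positivity) hM1
  have hbd : ∀ t, T ≤ t → S t ≤ M * (t : ℝ) ^ ρ := by
    intro t ht
    induction t, ht using Nat.le_induction with
    | base =>
      have h1 : (1 : ℝ) ≤ (T : ℝ) ^ ρ := Real.one_le_rpow (by exact_mod_cast hT1) hρ0.le
      have h2 : S T ≤ M := by
        have : 0 < 1 / (lam * (c / 2)) := by positivity
        linarith
      nlinarith
    | succ t ht ih =>
      have ht1 : 1 ≤ t := hT1.trans ht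
      have htp : (0 : ℝ) < t := by exact_mod_cast ht1
      have hu : 0 < (t : ℝ) ^ ρ := Real.rpow_pos_of_pos htp _
      have hg := (hT t ht).1
      rw [Real.rpow_neg htp.le, div_inv_eq_mul] at hg
      have hx : 0 < lam * γ t := mul_pos hlam (hγpos t)
      have hMx : 1 ≤ M * ((lam * γ t) * (t : ℝ) ^ ρ) := by
        have h3 : lam * (c / 2) ≤ (lam * γ t) * (t : ℝ) ^ ρ := by
          rw [mul_assoc]; exact mul_le_mul_of_nonneg_left hg.le hlam.le
        rw [div_le_iff₀ hb] at hM1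
        exact hM1.trans (mul_le_mul_of_nonneg_left h3 hMpos.le)
      have hE : (1 + lam * γ t) * Real.exp (-lam * γ t) ≤ 1 := by
        have h4 := Real.add_one_le_exp (lam * γ t)
        have h5 : Real.exp (lam * γ t) * Real.exp (-lam * γ t) = 1 := by
          rw [← Real.exp_add]; simp
        rw [← h5]
        exact mul_le_mul_of_nonneg_right (by linarith) (Real.exp_pos _).le
      rw [hrec t ht1]
      calc (S t + 1) * Real.exp (-lam * γ t)
          ≤ (M * (t : ℝ) ^ ρ * (1 + lam * γ t)) * Real.exp (-lam * γ t) :=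
            mul_le_mul_of_nonneg_right (by linarith) (Real.exp_pos _).le
        _ = M * (t : ℝ) ^ ρ * ((1 + lam * γ t) * Real.exp (-lam * γ t)) := by ring
        _ ≤ M * (t : ℝ) ^ ρ * 1 := mul_le_mul_of_nonneg_left hE (by positivity)
        _ = M * (t : ℝ) ^ ρ := mul_one _
        _ ≤ M * ((t + 1 : ℕ) : ℝ) ^ ρ := by
            refine mul_le_mul_of_nonneg_left ?_ hMpos.le
            exact Real.rpow_le_rpow htp.le (by push_cast; linarith) hρ0.le
  have hlim : Tendsto (fun t : ℕ => M * (t : ℝ) ^ (-(κ - ρ))) atTop (𝓝 0) := by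
    have := ((tendsto_rpow_neg_atTop (sub_pos.2 hκ)).comp
      (tendsto_natCast_atTop_atTop (R := ℝ))).const_mul M
    simpa using this
  refine tendsto_of_tendsto_of_tendsto_of_le_of_le' tendsto_const_nhds hlim ?_ ?_
  · exact Eventually.of_forall fun t => mul_nonneg (by positivity) (hS0 t)
  · filter_upwards [eventually_ge_atTop T] with t ht
    have htp : (0 : ℝ) < t := by exact_mod_cast hT1.trans ht
    calc (t : ℝ) ^ (-κ) * S t ≤ (t : ℝ) ^ (-κ) * (M * (t : ℝ) ^ ρ) :=
          mul_le_mul_of_nonneg_left (hbd t ht) (by positivity)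
      _ = M * ((t : ℝ) ^ (-κ) * (t : ℝ) ^ ρ) := by ring
      _ = M * (t : ℝ) ^ (-(κ - ρ)) := by
          rw [← Real.rpow_add htp]; ring_nf
end
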